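/- Let (A, μ, α, β) be a BiHom-associative algebra with α, β bijective, and let ψ, ω : A → A be linear maps with ψ(ab) = ψ(a)ψ(b) and ω(ab) = ω(a)ω(b) such that any two of α, β, ψ, ω commute. Let r, s ∈ A⊗A be α-, β-, ψ-, and ω-invariant, and define δ_r(a) = α⁻¹(a)▷r − r◁β⁻¹(a), δ_s(a) = α⁻¹(a)▷s − s◁β⁻¹(a), and Δ(a) = α⁻¹(a)▷r − s◁β⁻¹(a). Then (A, μ, δ_r, δ_s, Δ, α, β, ψ, ω) is a quasitriangular covariant BiHom-bialgebra (equivalently, (r, s) is an associative BiHom-Yang-Baxter pair of weight (0, 0)) if and only if (ω⊗Δ)(r) = r₁₃r₁₂ and (Δ⊗ψ)(s) = −s₂₃s₁₃. -/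

import Mathlib

open TensorProduct

section Defs

variable {K A : Type*} [Field K] [NonUnitalNonAssocRing A] [Module K A]
  [SMulCommClass K A A] [IsScalarTower K A A]

/-- The left action of `A` on `A⊗A`: `a ▷ (x⊗y) = ω(a)x ⊗ β(y)`. -/
noncomputable def lT2 (β ω : A →ₗ[K] A) (a : A) : A ⊗[K] A →ₗ[K] A ⊗[K] A :=
  TensorProduct.map (LinearMap.mulLeft K (ω a)) β

/-- The right action of `A` on `A⊗A`: `(x⊗y) ◁ a = α(x) ⊗ yψ(a)`. -/
noncomputable def rT2 (α ψ : A →ₗ[K] A) (a : A) : A ⊗[K] A →ₗ[K] A ⊗[K] A :=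
  TensorProduct.map α (LinearMap.mulRight K (ψ a))

/-- The left action of `A` on `A⊗A⊗A`: `a ▷ (x⊗y⊗z) = ω(a)x ⊗ β(y) ⊗ β(z)`. -/
noncomputable def lT3 (β ω : A →ₗ[K] A) (a : A) :
    A ⊗[K] (A ⊗[K] A) →ₗ[K] A ⊗[K] (A ⊗[K] A) :=
  TensorProduct.map (LinearMap.mulLeft K (ω a)) (TensorProduct.map β β)

/-- The right action of `A` on `A⊗A⊗A`: `(x⊗y⊗z) ◁ a = α(x) ⊗ α(y) ⊗ zψ(a)`. -/
noncomputable def rT3 (α ψ : A →ₗ[K] A) (a : A) :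
    A ⊗[K] (A ⊗[K] A) →ₗ[K] A ⊗[K] (A ⊗[K] A) :=
  TensorProduct.map α (TensorProduct.map α (LinearMap.mulRight K (ψ a)))

/-- The left action, bundled as a linear map in the acting variable. -/
noncomputable def lT2hom (β ω : A →ₗ[K] A) : A →ₗ[K] (A ⊗[K] A →ₗ[K] A ⊗[K] A) :=
  TensorProduct.homTensorHomMap (RingHom.id K) A A A A ∘ₗ
    (TensorProduct.mk K (A →ₗ[K] A) (A →ₗ[K] A)).flip β ∘ₗ LinearMap.mul K A ∘ₗ ω

/-- The right action, bundled as a linear map in the acting variable. -/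
noncomputable def rT2hom (α ψ : A →ₗ[K] A) : A →ₗ[K] (A ⊗[K] A →ₗ[K] A ⊗[K] A) :=
  TensorProduct.homTensorHomMap (RingHom.id K) A A A A ∘ₗ
    TensorProduct.mk K (A →ₗ[K] A) (A →ₗ[K] A) α ∘ₗ (LinearMap.mul K A).flip ∘ₗ ψ

/-- `a ↦ α⁻¹(a) ▷ r − s ◁ β⁻¹(a)`, as a linear map `A → A⊗A`. -/
noncomputable def deltaOp (α β : A ≃ₗ[K] A) (ψ ω : A →ₗ[K] A) (r s : A ⊗[K] A) :
    A →ₗ[K] A ⊗[K] A :=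
  (lT2hom β.toLinearMap ω).flip r ∘ₗ α.symm.toLinearMap -
    (rT2hom α.toLinearMap ψ).flip s ∘ₗ β.symm.toLinearMap

/-- `r₁₂s₂₃ = α(r¹) ⊗ r²s¹ ⊗ β(s²)`, as a linear map on `(A⊗A)⊗(A⊗A)`. -/
noncomputable def m1223 (α β : A →ₗ[K] A) :
    (A ⊗[K] A) ⊗[K] (A ⊗[K] A) →ₗ[K] A ⊗[K] (A ⊗[K] A) :=
  TensorProduct.map α (TensorProduct.map (LinearMap.mul' K A) β) ∘ₗ
    TensorProduct.map LinearMap.id (TensorProduct.assoc K A A A).symm.toLinearMap ∘ₗ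
    (TensorProduct.assoc K A A (A ⊗[K] A)).toLinearMap

/-- `r₁₃s₁₂ = ω(r¹)s¹ ⊗ β(s²) ⊗ αψ(r²)`. -/
noncomputable def m1312 (α β ψ ω : A →ₗ[K] A) :
    (A ⊗[K] A) ⊗[K] (A ⊗[K] A) →ₗ[K] A ⊗[K] (A ⊗[K] A) :=
  TensorProduct.map (LinearMap.mul' K A ∘ₗ TensorProduct.map ω LinearMap.id)
      ((TensorProduct.comm K A A).toLinearMap ∘ₗ TensorProduct.map (α ∘ₗ ψ) β) ∘ₗ
    (TensorProduct.tensorTensorTensorComm K A A A A).toLinearMap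

/-- `r₂₃s₁₃ = βω(s¹) ⊗ α(r¹) ⊗ r²ψ(s²)`. -/
noncomputable def m2313 (α β ψ ω : A →ₗ[K] A) :
    (A ⊗[K] A) ⊗[K] (A ⊗[K] A) →ₗ[K] A ⊗[K] (A ⊗[K] A) :=
  (TensorProduct.assoc K A A A).toLinearMap ∘ₗ
    TensorProduct.map ((TensorProduct.comm K A A).toLinearMap ∘ₗ TensorProduct.map α (β ∘ₗ ω))
      (LinearMap.mul' K A ∘ₗ TensorProduct.map LinearMap.id ψ) ∘ₗ
    (TensorProduct.tensorTensorTensorComm K A A A A).toLinearMap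

end Defs

/-- The coalgebra-side axioms of a covariant BiHom-bialgebra
`(A, μ, δ₁, δ₂, Δ, α, β, ψ, ω)`: `Δ` is compatible with `α, β, ψ, ω` and
BiHom-coassociative, `δ₁, δ₂` are BiHom-derivations, and `Δ` is a covariant
BiHom-derivation with respect to `(δ₁, δ₂)`. -/
noncomputable def IsCovariantBiHomBialgebra {K A : Type*} [Field K]
    [NonUnitalNonAssocRing A] [Module K A] [SMulCommClass K A A] [IsScalarTower K A A]
    (α β ψ ω : A →ₗ[K] A) (δ₁ δ₂ Δ : A →ₗ[K] A ⊗[K] A) : Prop :=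
  (∀ a, TensorProduct.map ψ ψ (Δ a) = Δ (ψ a)) ∧
  (∀ a, TensorProduct.map ω ω (Δ a) = Δ (ω a)) ∧
  (∀ a, TensorProduct.map α α (Δ a) = Δ (α a)) ∧
  (∀ a, TensorProduct.map β β (Δ a) = Δ (β a)) ∧
  -- BiHom-coassociativity: (Δ⊗ψ)∘Δ = (ω⊗Δ)∘Δ
  (∀ a, TensorProduct.assoc K A A A (TensorProduct.map Δ ψ (Δ a)) =
    TensorProduct.map ω Δ (Δ a)) ∧
  -- δ₁ is a BiHom-derivation
  (∀ a, TensorProduct.map α α (δ₁ a) = δ₁ (α a)) ∧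
  (∀ a, TensorProduct.map β β (δ₁ a) = δ₁ (β a)) ∧
  (∀ a, TensorProduct.map ψ ψ (δ₁ a) = δ₁ (ψ a)) ∧
  (∀ a, TensorProduct.map ω ω (δ₁ a) = δ₁ (ω a)) ∧
  (∀ a b, δ₁ (a * b) = lT2 β ω a (δ₁ b) + rT2 α ψ b (δ₁ a)) ∧
  -- δ₂ is a BiHom-derivation
  (∀ a, TensorProduct.map α α (δ₂ a) = δ₂ (α a)) ∧
  (∀ a, TensorProduct.map β β (δ₂ a) = δ₂ (β a)) ∧
  (∀ a, TensorProduct.map ψ ψ (δ₂ a) = δ₂ (ψ a)) ∧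
  (∀ a, TensorProduct.map ω ω (δ₂ a) = δ₂ (ω a)) ∧
  (∀ a b, δ₂ (a * b) = lT2 β ω a (δ₂ b) + rT2 α ψ b (δ₂ a)) ∧
  -- Δ is a covariant BiHom-derivation with respect to (δ₁, δ₂)
  (∀ a b, Δ (a * b) = rT2 α ψ b (Δ a) + lT2 β ω a (δ₁ b)) ∧
  (∀ a b, Δ (a * b) = lT2 β ω a (Δ b) + rT2 α ψ b (δ₂ a))

section Helpers

variable {K A : Type*} [Field K] [NonUnitalNonAssocRing A] [Module K A]
  [SMulCommClass K A A] [IsScalarTower K A A]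

/-- The first summand of `deltaOp`. -/
noncomputable def dL (α β : A ≃ₗ[K] A) (ω : A →ₗ[K] A) :
    A ⊗[K] A →ₗ[K] A →ₗ[K] A ⊗[K] A :=
  (LinearMap.lcomp K (A ⊗[K] A) α.symm.toLinearMap) ∘ₗ (lT2hom β.toLinearMap ω).flip

/-- The second summand of `deltaOp`. -/
noncomputable def dR (α β : A ≃ₗ[K] A) (ψ : A →ₗ[K] A) :
    A ⊗[K] A →ₗ[K] A →ₗ[K] A ⊗[K] A :=
  (LinearMap.lcomp K (A ⊗[K] A) β.symm.toLinearMap) ∘ₗ (rT2hom α.toLinearMap ψ).flip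

theorem deltaOp_eq (α β : A ≃ₗ[K] A) (ψ ω : A →ₗ[K] A) (r s : A ⊗[K] A) :
    deltaOp α β ψ ω r s = dL α β ω r - dR α β ψ s := rfl

theorem dL_tmul (α β : A ≃ₗ[K] A) (ω : A →ₗ[K] A) (x y a : A) :
    dL α β ω (x ⊗ₜ y) a = (ω (α.symm a) * x) ⊗ₜ β y := rfl

theorem dR_tmul (α β : A ≃ₗ[K] A) (ψ : A →ₗ[K] A) (x y a : A) :
    dR α β ψ (x ⊗ₜ y) a = α x ⊗ₜ (y * ψ (β.symm a)) := rfl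

theorem lT2_tmul (β ω : A →ₗ[K] A) (a x y : A) :
    lT2 β ω a (x ⊗ₜ y) = (ω a * x) ⊗ₜ β y := rfl

theorem rT2_tmul (α ψ : A →ₗ[K] A) (a x y : A) :
    rT2 α ψ a (x ⊗ₜ y) = α x ⊗ₜ (y * ψ a) := rfl

theorem lT3_tmul (β ω : A →ₗ[K] A) (a x y z : A) :
    lT3 β ω a (x ⊗ₜ (y ⊗ₜ z)) = (ω a * x) ⊗ₜ (β y ⊗ₜ β z) := rfl

theorem rT3_tmul (α ψ : A →ₗ[K] A) (a x y z : A) :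
    rT3 α ψ a (x ⊗ₜ (y ⊗ₜ z)) = α x ⊗ₜ (α y ⊗ₜ (z * ψ a)) := rfl

theorem m1223_tmul (α β : A →ₗ[K] A) (x y z w : A) :
    m1223 α β ((x ⊗ₜ[K] y) ⊗ₜ (z ⊗ₜ w)) = α x ⊗ₜ ((y * z) ⊗ₜ β w) := rfl

theorem m1312_tmul (α β ψ ω : A →ₗ[K] A) (x y z w : A) :
    m1312 α β ψ ω ((x ⊗ₜ[K] y) ⊗ₜ (z ⊗ₜ w)) = (ω x * z) ⊗ₜ (β w ⊗ₜ α (ψ y)) := rfl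

theorem m2313_tmul (α β ψ ω : A →ₗ[K] A) (x y z w : A) :
    m2313 α β ψ ω ((x ⊗ₜ[K] y) ⊗ₜ (z ⊗ₜ w)) = β (ω z) ⊗ₜ (α x ⊗ₜ (y * ψ w)) := rfl

theorem tmap_sub_right {B : Type*} [AddCommGroup B] [Module K B] (f : A →ₗ[K] A)
    (g h : A →ₗ[K] B) :
    TensorProduct.map f (g - h) = TensorProduct.map f g - TensorProduct.map f h := by
  rw [eq_sub_iff_add_eq, ← TensorProduct.map_add_right, sub_add_cancel]

theorem tmap_sub_left {B : Type*} [AddCommGroup B] [Module K B] (g h : A →ₗ[K] B)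
    (f : A →ₗ[K] A) :
    TensorProduct.map (g - h) f = TensorProduct.map g f - TensorProduct.map h f := by
  rw [eq_sub_iff_add_eq, ← TensorProduct.map_add_left, sub_add_cancel]

/-- Two-variable induction on pure tensors for bi-additive identities. -/
theorem ind2 {M : Type*} [AddCommGroup M] (F G : A ⊗[K] A → A ⊗[K] A → M)
    (hF1 : ∀ x y z, F (x + y) z = F x z + F y z) (hF2 : ∀ x y z, F x (y + z) = F x y + F x z)
    (hG1 : ∀ x y z, G (x + y) z = G x z + G y z) (hG2 : ∀ x y z, G x (y + z) = G x y + G x z)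
    (h : ∀ x y z w, F (x ⊗ₜ y) (z ⊗ₜ w) = G (x ⊗ₜ y) (z ⊗ₜ w)) (t p : A ⊗[K] A) :
    F t p = G t p := by
  have F10 : ∀ z, F 0 z = 0 := fun z => by simpa using hF1 0 0 z
  have G10 : ∀ z, G 0 z = 0 := fun z => by simpa using hG1 0 0 z
  have F20 : ∀ z, F z 0 = 0 := fun z => by simpa using hF2 z 0 0
  have G20 : ∀ z, G z 0 = 0 := fun z => by simpa using hG2 z 0 0
  induction t using TensorProduct.induction_on with
  | zero => rw [F10, G10]
  | add x y hx hy => rw [hF1, hG1, hx, hy]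
  | tmul x y =>
    induction p using TensorProduct.induction_on with
    | zero => rw [F20, G20]
    | add x y hx hy => rw [hF2, hG2, hx, hy]
    | tmul z w => exact h x y z w

/-- Induction on pure tensors for additive identities. -/
theorem ind1 {M : Type*} [AddCommGroup M] (F G : A ⊗[K] A → M)
    (hF1 : ∀ x y, F (x + y) = F x + F y) (hG1 : ∀ x y, G (x + y) = G x + G y)
    (h : ∀ x y, F (x ⊗ₜ y) = G (x ⊗ₜ y)) (t : A ⊗[K] A) : F t = G t := by
  have F10 : F 0 = 0 := by simpa using hF1 0 0
  have G10 : G 0 = 0 := by simpa using hG1 0 0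
  induction t using TensorProduct.induction_on with
  | zero => rw [F10, G10]
  | add x y hx hy => rw [hF1, hG1, hx, hy]
  | tmul x y => exact h x y

end Helpers

/-- Theorem 2.26 / Theorem 2.15 of the paper: with the data of
Statement 11, `(A, μ, δ_r, δ_s, Δ, α, β, ψ, ω)` is a quasitriangular covariant
BiHom-bialgebra (equivalently, `(r, s)` is an associative BiHom-Yang-Baxter pair
of weight `(0, 0)`) if and only if `(ω⊗Δ)(r) = r₁₃r₁₂` and `(Δ⊗ψ)(s) = −s₂₃s₁₃`. -/
theorem stmt13 {K A : Type*} [Field K] [NonUnitalNonAssocRing A] [Module K A]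
    [SMulCommClass K A A] [IsScalarTower K A A]
    (α β : A ≃ₗ[K] A) (ψ ω : A →ₗ[K] A) (r s : A ⊗[K] A)
    -- BiHom-associative algebra axioms for (A, ·, α, β)
    (hαmul : ∀ a b, α (a * b) = α a * α b)
    (hβmul : ∀ a b, β (a * b) = β a * β b)
    (hassoc : ∀ a b c, α a * (b * c) = (a * b) * β c)
    -- ψ, ω multiplicative
    (hψmul : ∀ a b, ψ (a * b) = ψ a * ψ b)
    (hωmul : ∀ a b, ω (a * b) = ω a * ω b)
    -- α, β, ψ, ω pairwise commute
    (hαβ : ∀ a, α (β a) = β (α a)) (hαψ : ∀ a, α (ψ a) = ψ (α a))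
    (hαω : ∀ a, α (ω a) = ω (α a)) (hβψ : ∀ a, β (ψ a) = ψ (β a))
    (hβω : ∀ a, β (ω a) = ω (β a)) (hψω : ∀ a, ψ (ω a) = ω (ψ a))
    -- r, s are α-, β-, ψ-, ω-invariant
    (hrα : TensorProduct.map α.toLinearMap α.toLinearMap r = r)
    (hrβ : TensorProduct.map β.toLinearMap β.toLinearMap r = r)
    (hrψ : TensorProduct.map ψ ψ r = r)
    (hrω : TensorProduct.map ω ω r = r)
    (hsα : TensorProduct.map α.toLinearMap α.toLinearMap s = s)
    (hsβ : TensorProduct.map β.toLinearMap β.toLinearMap s = s)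
    (hsψ : TensorProduct.map ψ ψ s = s)
    (hsω : TensorProduct.map ω ω s = s) :
    -- (A, μ, δ_r, δ_s, Δ, α, β, ψ, ω) is a quasitriangular covariant
    -- BiHom-bialgebra, i.e. (r, s) is an abhYBp of weight (0, 0) …
    ((m1312 α.toLinearMap β.toLinearMap ψ ω (r ⊗ₜ[K] r)
        - m1223 α.toLinearMap β.toLinearMap (r ⊗ₜ[K] r)
        + m2313 α.toLinearMap β.toLinearMap ψ ω (s ⊗ₜ[K] r) = 0) ∧
     (m1312 α.toLinearMap β.toLinearMap ψ ω (s ⊗ₜ[K] r)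
        - m1223 α.toLinearMap β.toLinearMap (s ⊗ₜ[K] s)
        + m2313 α.toLinearMap β.toLinearMap ψ ω (s ⊗ₜ[K] s) = 0) ∧
     IsCovariantBiHomBialgebra α.toLinearMap β.toLinearMap ψ ω
       (deltaOp α β ψ ω r r) (deltaOp α β ψ ω s s) (deltaOp α β ψ ω r s))
    ↔
    -- … iff (ω⊗Δ)(r) = r₁₃r₁₂ and (Δ⊗ψ)(s) = −s₂₃s₁₃
    ((TensorProduct.map ω (deltaOp α β ψ ω r s) r =
        m1312 α.toLinearMap β.toLinearMap ψ ω (r ⊗ₜ[K] r)) ∧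
     (TensorProduct.assoc K A A A (TensorProduct.map (deltaOp α β ψ ω r s) ψ s) =
        - m2313 α.toLinearMap β.toLinearMap ψ ω (s ⊗ₜ[K] s))) := by
  have iαm : ∀ a b, α.symm (a * b) = α.symm a * α.symm b := fun a b => by
    apply α.injective; simp [hαmul]
  have iβm : ∀ a b, β.symm (a * b) = β.symm a * β.symm b := fun a b => by
    apply β.injective; simp [hβmul]
  have iαβ : ∀ a, α.symm (β a) = β (α.symm a) := fun a => by
    apply α.injective; simp [hαβ]
  have iαψ : ∀ a, α.symm (ψ a) = ψ (α.symm a) := fun a => by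
    apply α.injective; simp [hαψ]
  have iαω : ∀ a, α.symm (ω a) = ω (α.symm a) := fun a => by
    apply α.injective; simp [hαω]
  have iβψ : ∀ a, β.symm (ψ a) = ψ (β.symm a) := fun a => by
    apply β.injective; simp [hβψ]
  have iβω : ∀ a, β.symm (ω a) = ω (β.symm a) := fun a => by
    apply β.injective; simp [hβω]
  have iαβmix : ∀ a, α (β.symm a) = β.symm (α a) := fun a => by
    apply β.injective; simp [← hαβ]
  have iαβsymm : ∀ a, α.symm (β.symm a) = β.symm (α.symm a) := fun a => by
    apply α.injective; simp [iαβmix]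
  have has : ∀ a b c, (a * b) * c = α a * (b * β.symm c) := fun a b c => by
    rw [hassoc, LinearEquiv.apply_symm_apply]
  clear hassoc
  have hN := And.intro hαmul <|
    And.intro hβmul <|
    And.intro hψmul <|
    And.intro hωmul <|
    And.intro hαβ <|
    And.intro hαψ <|
    And.intro hαω <|
    And.intro hβψ <|
    And.intro hβω <|
    And.intro hψω <|
    And.intro iαm <|
    And.intro iβm <|
    And.intro iαβ <|
    And.intro iαψ <|
    And.intro iαω <|
    And.intro iβψ <|
    And.intro iβω <|
    And.intro iαβmix <|
    And.intro iαβsymm <| has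
  obtain ⟨k1, k2, k3, k4⟩ :
      (∀ (t p : A ⊗[K] A), TensorProduct.map ω (dL α β ω p) (TensorProduct.map α.toLinearMap α.toLinearMap t) =
        m1223 α.toLinearMap β.toLinearMap ((TensorProduct.map ω ω t) ⊗ₜ[K] p)) ∧
      (∀ (t p : A ⊗[K] A), TensorProduct.map ω (dR α β ψ p) (TensorProduct.map β.toLinearMap β.toLinearMap t) =
        m2313 α.toLinearMap β.toLinearMap ψ ω (p ⊗ₜ[K] t)) ∧
      (∀ (t p : A ⊗[K] A), TensorProduct.assoc K A A A (TensorProduct.map (dL α β ω p) ψ (TensorProduct.map α.toLinearMap α.toLinearMap t)) =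
        m1312 α.toLinearMap β.toLinearMap ψ ω (t ⊗ₜ[K] p)) ∧
      (∀ (t p : A ⊗[K] A), TensorProduct.assoc K A A A (TensorProduct.map (dR α β ψ p) ψ (TensorProduct.map β.toLinearMap β.toLinearMap t)) =
        m1223 α.toLinearMap β.toLinearMap (p ⊗ₜ[K] (TensorProduct.map ψ ψ t))) := by
    refine ⟨?_, ?_, ?_, ?_⟩
    all_goals
      refine ind2 _ _ ?_ ?_ ?_ ?_ ?_
      iterate 4 (· intro x y z; simp only [map_add, TensorProduct.map_add_left, TensorProduct.map_add_right, TensorProduct.tmul_add,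
          TensorProduct.add_tmul, LinearMap.add_apply])
      · intro x y z w
        simp only [dL_tmul, dR_tmul, lT2_tmul, rT2_tmul, lT3_tmul, rT3_tmul, m1223_tmul, m1312_tmul, m2313_tmul,
          TensorProduct.map_tmul, TensorProduct.assoc_tmul, LinearEquiv.coe_coe]
        simp only [hN, LinearEquiv.apply_symm_apply, LinearEquiv.symm_apply_apply]
  obtain ⟨T1, U1, U2, T3, T4, U4, TU⟩ :
      (∀ (a : A) (t p : A ⊗[K] A), TensorProduct.assoc K A A A (TensorProduct.map (dL α β ω (TensorProduct.map β.toLinearMap β.toLinearMap p)) ψ (dL α β ω (TensorProduct.map α.toLinearMap α.toLinearMap t) a)) =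
        lT3 β.toLinearMap ω (ω (α.symm a)) (m1312 α.toLinearMap β.toLinearMap ψ ω (t ⊗ₜ[K] p))) ∧
      (∀ (a : A) (t p : A ⊗[K] A), TensorProduct.map ω (dL α β ω (TensorProduct.map β.toLinearMap β.toLinearMap p)) (dL α β ω (TensorProduct.map α.toLinearMap α.toLinearMap t) a) =
        lT3 β.toLinearMap ω (ω (α.symm a)) (m1223 α.toLinearMap β.toLinearMap ((TensorProduct.map ω ω t) ⊗ₜ[K] p))) ∧
      (∀ (a : A) (t p : A ⊗[K] A), TensorProduct.map ω (dR α β ψ (TensorProduct.map β.toLinearMap β.toLinearMap p)) (dL α β ω (TensorProduct.map β.toLinearMap β.toLinearMap t) a) =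
        lT3 β.toLinearMap ω (ω (α.symm a)) (m2313 α.toLinearMap β.toLinearMap ψ ω (p ⊗ₜ[K] t))) ∧
      (∀ (a : A) (t p : A ⊗[K] A), TensorProduct.assoc K A A A (TensorProduct.map (dL α β ω (TensorProduct.map α.toLinearMap α.toLinearMap p)) ψ (dR α β ψ (TensorProduct.map α.toLinearMap α.toLinearMap t) a)) =
        rT3 α.toLinearMap ψ (ψ (β.symm a)) (m1312 α.toLinearMap β.toLinearMap ψ ω (t ⊗ₜ[K] p))) ∧
      (∀ (a : A) (t p : A ⊗[K] A), TensorProduct.assoc K A A A (TensorProduct.map (dR α β ψ (TensorProduct.map α.toLinearMap α.toLinearMap p)) ψ (dR α β ψ (TensorProduct.map β.toLinearMap β.toLinearMap t) a)) =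
        rT3 α.toLinearMap ψ (ψ (β.symm a)) (m1223 α.toLinearMap β.toLinearMap (p ⊗ₜ[K] (TensorProduct.map ψ ψ t)))) ∧
      (∀ (a : A) (t p : A ⊗[K] A), TensorProduct.map ω (dR α β ψ (TensorProduct.map α.toLinearMap α.toLinearMap p)) (dR α β ψ (TensorProduct.map β.toLinearMap β.toLinearMap t) a) =
        rT3 α.toLinearMap ψ (ψ (β.symm a)) (m2313 α.toLinearMap β.toLinearMap ψ ω (p ⊗ₜ[K] t))) ∧
      (∀ (a : A) (t p : A ⊗[K] A), TensorProduct.assoc K A A A (TensorProduct.map (dR α β ψ (TensorProduct.map α.toLinearMap α.toLinearMap (TensorProduct.map ω ω p))) ψ (dL α β ω (TensorProduct.map β.toLinearMap β.toLinearMap t) a)) =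
        TensorProduct.map ω (dL α β ω (TensorProduct.map β.toLinearMap β.toLinearMap (TensorProduct.map ψ ψ t))) (dR α β ψ (TensorProduct.map α.toLinearMap α.toLinearMap p) a)) := by
    refine ⟨?_, ?_, ?_, ?_, ?_, ?_, ?_⟩
    all_goals
      intro a
      refine ind2 _ _ ?_ ?_ ?_ ?_ ?_
      iterate 4 (· intro x y z; simp only [map_add, TensorProduct.map_add_left, TensorProduct.map_add_right, TensorProduct.tmul_add,
          TensorProduct.add_tmul, LinearMap.add_apply])
      · intro x y z w
        simp only [dL_tmul, dR_tmul, lT2_tmul, rT2_tmul, lT3_tmul, rT3_tmul, m1223_tmul, m1312_tmul, m2313_tmul,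
          TensorProduct.map_tmul, TensorProduct.assoc_tmul, LinearEquiv.coe_coe]
        simp only [hN, LinearEquiv.apply_symm_apply, LinearEquiv.symm_apply_apply]
  obtain ⟨cLα, cRα, cLβ, cRβ, cLψ, cRψ, cLω, cRω⟩ :
      (∀ (a : A) (t : A ⊗[K] A), TensorProduct.map α.toLinearMap α.toLinearMap (dL α β ω t a) =
        dL α β ω (TensorProduct.map α.toLinearMap α.toLinearMap t) (α a)) ∧
      (∀ (a : A) (t : A ⊗[K] A), TensorProduct.map α.toLinearMap α.toLinearMap (dR α β ψ t a) =
        dR α β ψ (TensorProduct.map α.toLinearMap α.toLinearMap t) (α a)) ∧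
      (∀ (a : A) (t : A ⊗[K] A), TensorProduct.map β.toLinearMap β.toLinearMap (dL α β ω t a) =
        dL α β ω (TensorProduct.map β.toLinearMap β.toLinearMap t) (β a)) ∧
      (∀ (a : A) (t : A ⊗[K] A), TensorProduct.map β.toLinearMap β.toLinearMap (dR α β ψ t a) =
        dR α β ψ (TensorProduct.map β.toLinearMap β.toLinearMap t) (β a)) ∧
      (∀ (a : A) (t : A ⊗[K] A), TensorProduct.map ψ ψ (dL α β ω t a) =
        dL α β ω (TensorProduct.map ψ ψ t) (ψ a)) ∧
      (∀ (a : A) (t : A ⊗[K] A), TensorProduct.map ψ ψ (dR α β ψ t a) =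
        dR α β ψ (TensorProduct.map ψ ψ t) (ψ a)) ∧
      (∀ (a : A) (t : A ⊗[K] A), TensorProduct.map ω ω (dL α β ω t a) =
        dL α β ω (TensorProduct.map ω ω t) (ω a)) ∧
      (∀ (a : A) (t : A ⊗[K] A), TensorProduct.map ω ω (dR α β ψ t a) =
        dR α β ψ (TensorProduct.map ω ω t) (ω a)) := by
    refine ⟨?_, ?_, ?_, ?_, ?_, ?_, ?_, ?_⟩
    all_goals
      intro a
      refine ind1 _ _ ?_ ?_ ?_
      iterate 2 (· intro x y; simp only [map_add, TensorProduct.map_add_left, TensorProduct.map_add_right, TensorProduct.tmul_add,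
          TensorProduct.add_tmul, LinearMap.add_apply])
      · intro x y
        simp only [dL_tmul, dR_tmul, lT2_tmul, rT2_tmul, lT3_tmul, rT3_tmul, m1223_tmul, m1312_tmul, m2313_tmul,
          TensorProduct.map_tmul, TensorProduct.assoc_tmul, LinearEquiv.coe_coe]
        simp only [hN, LinearEquiv.apply_symm_apply, LinearEquiv.symm_apply_apply]
  obtain ⟨dLm, dRm, dLR⟩ :
      (∀ (a b : A) (t : A ⊗[K] A), dL α β ω (TensorProduct.map β.toLinearMap β.toLinearMap t) (a * b) =
        lT2 β.toLinearMap ω a (dL α β ω t b)) ∧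
      (∀ (a b : A) (t : A ⊗[K] A), dR α β ψ (TensorProduct.map α.toLinearMap α.toLinearMap t) (a * b) =
        rT2 α.toLinearMap ψ b (dR α β ψ t a)) ∧
      (∀ (a b : A) (t : A ⊗[K] A), lT2 β.toLinearMap ω a (dR α β ψ t b) =
        rT2 α.toLinearMap ψ b (dL α β ω t a)) := by
    refine ⟨?_, ?_, ?_⟩
    all_goals
      intro a b
      refine ind1 _ _ ?_ ?_ ?_
      iterate 2 (· intro x y; simp only [map_add, TensorProduct.map_add_left, TensorProduct.map_add_right, TensorProduct.tmul_add,
          TensorProduct.add_tmul, LinearMap.add_apply])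
      · intro x y
        simp only [dL_tmul, dR_tmul, lT2_tmul, rT2_tmul, lT3_tmul, rT3_tmul, m1223_tmul, m1312_tmul, m2313_tmul,
          TensorProduct.map_tmul, TensorProduct.assoc_tmul, LinearEquiv.coe_coe]
        simp only [hN, LinearEquiv.apply_symm_apply, LinearEquiv.symm_apply_apply]
  have cov : ∀ u v w : A ⊗[K] A, TensorProduct.map β.toLinearMap β.toLinearMap u = u →
      TensorProduct.map α.toLinearMap α.toLinearMap w = w → ∀ a b,
      dL α β ω u (a * b) - dR α β ψ w (a * b) =
        lT2 β.toLinearMap ω a (dL α β ω u b - dR α β ψ v b) +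
        rT2 α.toLinearMap ψ b (dL α β ω v a - dR α β ψ w a) := by
    intro u v w hu hw a b
    have e1 := dLm a b u
    have e2 := dRm a b w
    rw [hu] at e1
    rw [hw] at e2
    rw [map_sub, map_sub, e1, e2, dLR]
    abel
  have K1 := k1 r r
  have K2 := k2 r s
  have K3 := k3 s r
  have K4 := k4 s s
  rw [hrα, hrω] at K1
  rw [hrβ] at K2
  rw [hsα] at K3
  rw [hsβ, hsψ] at K4
  have E1 : TensorProduct.map ω (deltaOp α β ψ ω r s) r =
      m1223 α.toLinearMap β.toLinearMap (r ⊗ₜ[K] r) -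
        m2313 α.toLinearMap β.toLinearMap ψ ω (s ⊗ₜ[K] r) := by
    rw [deltaOp_eq, tmap_sub_right, LinearMap.sub_apply, K1, K2]
  have E2 : TensorProduct.assoc K A A A (TensorProduct.map (deltaOp α β ψ ω r s) ψ s) =
      m1312 α.toLinearMap β.toLinearMap ψ ω (s ⊗ₜ[K] r) -
        m1223 α.toLinearMap β.toLinearMap (s ⊗ₜ[K] s) := by
    rw [deltaOp_eq, tmap_sub_left, LinearMap.sub_apply, map_sub, K3, K4]
  rw [E1, E2]
  constructor
  · rintro ⟨h1, h2, -⟩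
    refine ⟨?_, eq_neg_of_add_eq_zero_left h2⟩
    rw [← sub_eq_zero, ← neg_eq_zero, ← h1]
    abel
  · rintro ⟨h1, h2⟩
    refine ⟨by rw [← h1]; abel, by rw [h2]; abel, ?_⟩
    have comm : ∀ (f : A →ₗ[K] A) (u v : A ⊗[K] A), TensorProduct.map f f u = u →
        TensorProduct.map f f v = v →
        (∀ a t, TensorProduct.map f f (dL α β ω t a) = dL α β ω (TensorProduct.map f f t) (f a)) →
        (∀ a t, TensorProduct.map f f (dR α β ψ t a) = dR α β ψ (TensorProduct.map f f t) (f a)) →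
        ∀ a, TensorProduct.map f f (deltaOp α β ψ ω u v a) = deltaOp α β ψ ω u v (f a) := by
      intro f u v hu hv hL hR a
      rw [deltaOp_eq, LinearMap.sub_apply, LinearMap.sub_apply, map_sub, hL, hR, hu, hv]
    refine ⟨comm ψ r s hrψ hsψ cLψ cRψ, comm ω r s hrω hsω cLω cRω, comm _ r s hrα hsα cLα cRα,
      comm _ r s hrβ hsβ cLβ cRβ, ?_,
      comm _ r r hrα hrα cLα cRα, comm _ r r hrβ hrβ cLβ cRβ,
      comm ψ r r hrψ hrψ cLψ cRψ, comm ω r r hrω hrω cLω cRω, ?_,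
      comm _ s s hsα hsα cLα cRα, comm _ s s hsβ hsβ cLβ cRβ,
      comm ψ s s hsψ hsψ cLψ cRψ, comm ω s s hsω hsω cLω cRω, ?_, ?_, ?_⟩
    · intro a
      have t1 := T1 a r r
      have u1 := U1 a r r
      have u2 := U2 a r s
      have t3 := T3 a s r
      have t4 := T4 a s s
      have u4 := U4 a s s
      have tu := TU a r s
      rw [hrα, hrβ] at t1
      rw [hrα, hrβ, hrω] at u1
      rw [hrβ, hsβ] at u2
      rw [hrα, hsα] at t3
      rw [hsα, hsβ, hsψ] at t4
      rw [hsα, hsβ] at u4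
      rw [hsω, hsα, hrβ, hrψ, hrβ] at tu
      have g1 := congrArg (lT3 β.toLinearMap ω (ω (α.symm a))) h1
      have g2 := congrArg (rT3 α.toLinearMap ψ (ψ (β.symm a))) h2
      simp only [map_sub, map_neg] at g1 g2
      rw [← t1, ← u1, ← u2] at g1
      rw [← t3, ← t4, ← u4] at g2
      simp only [deltaOp_eq, tmap_sub_right, tmap_sub_left,
        LinearMap.sub_apply, map_sub]
      rw [tu, ← g1]
      rw [sub_eq_iff_eq_add] at g2
      rw [g2]
      abel
    · exact cov r r r hrβ hrα
    · exact cov s s s hsβ hsα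
    · intro a b
      rw [add_comm]
      exact cov r r s hrβ hsα a b
    · exact cov r s s hrβ hsα
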